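/- Let y ∈ ℂ with Re(y) > 0. Then lim_{a→0} [ ζ'(1−a)/y − (1/2) ζ'(−a) − (1/2) (2π/y)^{1+a} csc(πa/2) ζ'(−a) + (1/2) ζ(−a) (2π/y)^{1+a} csc(πa/2) ( log(2π/y) − (π/2) cot(πa/2) ) ] = (1/4) log(2π) − log²(y)/(2y) + γ²/(2y) − π²/(12y), where the limit is taken as a → 0 through complex values a ≠ 0 in a punctured neighborhood of 0. -/

import Mathlib

open Filter Topology MeasureTheory

noncomputable def eulerGamma : ℝ := Real.eulerMascheroniConstant

noncomputable def gamma1 : ℝ :=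
  limUnder atTop (fun n : ℕ => ∑ j ∈ Finset.Icc 1 n, Real.log j / j - (Real.log n) ^ 2 / 2)

/-!
Write `F a = ζ(-a) (2π/y)^(1+a) / (2 sin(πa/2))`. The last two terms of the expression add up to
`F' a`, and the functional equation turns `F` into `F a = -M(1+a) ζ(1+a)`, where
`M s = y⁻ˢ Γ(s)`. Both `ζ'(1-a)/y` and `F' a` are therefore derivatives of functions with a simple
pole of residue `±y⁻¹`, and their double poles `∓y⁻¹/a²` cancel. What is left is read off from the
second-order Taylor coefficients of `M(s) · (s-1)ζ(s)` at `s = 1` and from `ζ'(0) = -log(2π)/2`; the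
`π²` comes from `Γ''(1) = γ² + π²/6`.
-/

section SecondOrder

variable {𝕜 : Type*} [NontriviallyNormedField 𝕜] {f g : 𝕜 → 𝕜} {c : 𝕜}

theorem iteratedDeriv_two_fun_mul (hf : ContDiffAt 𝕜 2 f c) (hg : ContDiffAt 𝕜 2 g c) :
    iteratedDeriv 2 (fun a ↦ f a * g a) c =
      f c * iteratedDeriv 2 g c + 2 * deriv f c * deriv g c + iteratedDeriv 2 f c * g c := by
  simpa [Finset.sum_range_succ] using iteratedDeriv_fun_mul hf hg

theorem iteratedDeriv_two_mul_reflection (hf : ContDiffAt 𝕜 2 f c) :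
    iteratedDeriv 2 (fun a ↦ f (c + a) * f (c - a)) 0 =
      2 * (f c * iteratedDeriv 2 f c - deriv f c ^ 2) := by
  have hadd : ContDiffAt 𝕜 2 (fun a ↦ f (c + a)) 0 :=
    ContDiffAt.fun_comp 0 (by simpa using hf) (by fun_prop)
  have hsub : ContDiffAt 𝕜 2 (fun a ↦ f (c - a)) 0 :=
    ContDiffAt.fun_comp 0 (by simpa using hf) (by fun_prop)
  rw [iteratedDeriv_two_fun_mul hadd hsub]
  simp only [iteratedDeriv_comp_const_add, iteratedDeriv_comp_const_sub, deriv_comp_const_add,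
    deriv_comp_const_sub, add_zero, sub_zero, smul_eq_mul]
  ring

theorem analyticAt_dslope_same (hf : AnalyticAt 𝕜 f c) : AnalyticAt 𝕜 (dslope f c) c :=
  let ⟨_, hp⟩ := hf
  hp.has_fpower_series_dslope_fslope.analyticAt

variable [CompleteSpace 𝕜] [CharZero 𝕜]

theorem deriv_dslope_same (hf : AnalyticAt 𝕜 f c) :
    deriv (dslope f c) c = iteratedDeriv 2 f c / 2 := by
  simpa using hf.hasFPowerSeriesAt.has_fpower_series_dslope_fslope.deriv

theorem tendsto_deriv_div_sub_add_div_sq (hf : AnalyticAt 𝕜 f c) :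
    Tendsto (fun s ↦ deriv (fun t ↦ f t / (t - c)) s + f c / (s - c) ^ 2) (𝓝[≠] c)
      (𝓝 (iteratedDeriv 2 f c / 2)) := by
  have hg : AnalyticAt 𝕜 (dslope f c) c := analyticAt_dslope_same hf
  have hsplit : (fun t ↦ f t / (t - c)) =ᶠ[𝓝[≠] c] fun t ↦ f c * (t - c)⁻¹ + dslope f c t := by
    filter_upwards [self_mem_nhdsWithin] with t ht
    rw [dslope_of_ne f ht, slope_def_field]
    ring
  rw [← deriv_dslope_same hf]
  refine (hg.deriv.continuousAt.tendsto.mono_left nhdsWithin_le_nhds).congr' ?_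
  filter_upwards [hsplit.nhdsNE_deriv, self_mem_nhdsWithin,
    nhdsWithin_le_nhds hg.eventually_analyticAt] with s hs hsc hgs
  have hpole : HasDerivAt (fun t ↦ f c * (t - c)⁻¹) (f c * (-1 / (s - c) ^ 2)) s :=
    (((hasDerivAt_id s).sub_const c).inv (sub_ne_zero.2 hsc)).const_mul _
  rw [hs, (hpole.fun_add hgs.differentiableAt.hasDerivAt).deriv]
  ring

end SecondOrder

section Zeta

theorem tendsto_deriv_mul_riemannZeta_add_div_sq {f : ℂ → ℂ} (hf : AnalyticAt ℂ f 1) :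
    Tendsto (fun s ↦ deriv (fun t ↦ f t * riemannZeta t) s + f 1 / (s - 1) ^ 2) (𝓝[≠] 1)
      (𝓝 (iteratedDeriv 2 f 1 / 2 + Real.eulerMascheroniConstant * deriv f 1
        + f 1 * (iteratedDeriv 2 riemannZeta₁ 1 / 2))) := by
  have hζ : AnalyticAt ℂ riemannZeta₁ 1 := differentiable_riemannZeta₁.analyticAt 1
  have hcoeff : iteratedDeriv 2 (fun t ↦ f t * riemannZeta₁ t) 1 / 2 =
      iteratedDeriv 2 f 1 / 2 + Real.eulerMascheroniConstant * deriv f 1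
        + f 1 * (iteratedDeriv 2 riemannZeta₁ 1 / 2) := by
    rw [iteratedDeriv_two_fun_mul hf.contDiffAt hζ.contDiffAt, deriv_riemannZeta₁_one,
      riemannZeta₁_one]
    ring
  have hfactor : (fun t ↦ f t * riemannZeta₁ t / (t - 1)) =ᶠ[𝓝[≠] 1]
      fun t ↦ f t * riemannZeta t := by
    filter_upwards [self_mem_nhdsWithin] with t ht
    rw [riemannZeta_eq_inv_sub_mul ht]
    ring
  rw [← hcoeff]
  refine (tendsto_deriv_div_sub_add_div_sq (hf.fun_mul hζ)).congr' ?_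
  filter_upwards [hfactor.nhdsNE_deriv] with s hs
  rw [hs, riemannZeta₁_one, mul_one]

theorem tendsto_deriv_riemannZeta_add_inv_sq :
    Tendsto (fun s ↦ deriv riemannZeta s + ((s - 1) ^ 2)⁻¹) (𝓝[≠] 1)
      (𝓝 (iteratedDeriv 2 riemannZeta₁ 1 / 2)) := by
  simpa [iteratedDeriv_const] using
    tendsto_deriv_mul_riemannZeta_add_div_sq (analyticAt_const (v := (1 : ℂ)))

theorem tendsto_deriv_riemannZeta_one_sub_add_inv_sq :
    Tendsto (fun a ↦ deriv riemannZeta (1 - a) + (a ^ 2)⁻¹) (𝓝[≠] 0)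
      (𝓝 (iteratedDeriv 2 riemannZeta₁ 1 / 2)) := by
  have hsub : Tendsto (fun a : ℂ ↦ 1 - a) (𝓝[≠] 0) (𝓝[≠] 1) := by
    simpa using ((hasDerivAt_id (0 : ℂ)).const_sub 1).tendsto_nhdsNE (by simp)
  simpa [Function.comp_def] using tendsto_deriv_riemannZeta_add_inv_sq.comp hsub

theorem tendsto_deriv_riemannZeta_neg :
    Tendsto (fun a ↦ deriv riemannZeta (-a)) (𝓝[≠] 0)
      (𝓝 (-Complex.log (2 * Real.pi) / 2)) := by
  have hcont : ContinuousAt (deriv riemannZeta) 0 :=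
    (analyticOn_riemannZeta 0 (by simp)).deriv.continuousAt
  have hneg : Tendsto (fun a : ℂ ↦ -a) (𝓝[≠] 0) (𝓝 0) := by
    simpa using (tendsto_neg (0 : ℂ)).mono_left nhdsWithin_le_nhds
  rw [← deriv_riemannZeta_zero]
  exact hcont.tendsto.comp hneg

end Zeta

section Gamma

theorem analyticAt_complexGamma {s : ℂ} (hs : ∀ m : ℕ, s ≠ -m) :
    AnalyticAt ℂ Complex.Gamma s :=
  (Meromorphic.Gamma s).analyticAt (Complex.differentiableAt_Gamma s hs).continuousAt

theorem ne_neg_natCast_of_re_pos {s : ℂ} (hs : 0 < s.re) (m : ℕ) : s ≠ -m := by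
  rintro rfl
  have : (0 : ℝ) ≤ m := m.cast_nonneg
  rw [Complex.neg_re, Complex.natCast_re] at hs
  linarith

theorem analyticAt_complexGamma_one : AnalyticAt ℂ Complex.Gamma 1 :=
  analyticAt_complexGamma (ne_neg_natCast_of_re_pos (by simp))

theorem Gamma_one_add_mul_Gamma_one_sub {a : ℂ} (ha : a ≠ 0) :
    Complex.Gamma (1 + a) * Complex.Gamma (1 - a) = Real.pi * a / Complex.sin (Real.pi * a) := by
  rw [add_comm, Complex.Gamma_add_one a ha, mul_assoc, Complex.Gamma_mul_Gamma_one_sub]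
  ring

theorem eventually_sin_const_mul_ne_zero {c : ℂ} (hc : c ≠ 0) :
    ∀ᶠ a in 𝓝[≠] 0, Complex.sin (c * a) ≠ 0 := by
  have h : HasDerivAt (fun a ↦ Complex.sin (c * a)) c 0 := by
    simpa using ((hasDerivAt_id (0 : ℂ)).const_mul c).csin
  exact h.eventually_ne hc

theorem iteratedDeriv_two_Gamma_mul_reflection :
    iteratedDeriv 2 (fun a ↦ Complex.Gamma (1 + a) * Complex.Gamma (1 - a)) 0 =
      (Real.pi : ℂ) ^ 2 / 3 := by
  set P : ℂ → ℂ := fun a ↦ Complex.Gamma (1 + a) * Complex.Gamma (1 - a)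
  have hπ : (Real.pi : ℂ) ≠ 0 := Complex.ofReal_ne_zero.2 Real.pi_ne_zero
  have hΓ := analyticAt_complexGamma_one
  have hP : AnalyticAt ℂ P 0 :=
    (AnalyticAt.fun_comp (by simpa using hΓ) (by fun_prop)).mul
      (AnalyticAt.fun_comp (by simpa using hΓ) (by fun_prop))
  have hP0 : P 0 = 1 := by simp [P]
  have hsin : AnalyticAt ℂ (fun a ↦ Complex.sin (Real.pi * a)) 0 := by fun_prop
  have hreflect : (fun a ↦ P a * Complex.sin (Real.pi * a)) =ᶠ[𝓝 0] fun a ↦ Real.pi * a := by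
    refine eventually_nhdsWithin_iff.1 (eventually_sin_const_mul_ne_zero hπ) |>.mono fun a ha ↦ ?_
    rcases eq_or_ne a 0 with rfl | ha0
    · simp
    · simp only [P, Gamma_one_add_mul_Gamma_one_sub ha0, div_mul_cancel₀ _ (ha ha0)]
  -- As `sin (π a)` vanishes at `0`, the second derivative of the product does not involve that of
  -- `P`; the third one does, and involves no higher derivative of `P`.
  have hthird := hreflect.iteratedDeriv_eq 3
  rw [iteratedDeriv_fun_mul hP.contDiffAt hsin.contDiffAt, iteratedDeriv_const_mul_field] at hthird
  have : -(Real.pi : ℂ) ^ 3 + 3 * iteratedDeriv 2 P 0 * Real.pi = 0 := by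
    simpa [Finset.sum_range_succ, hP0, iteratedDeriv_comp_const_mul, Complex.contDiff_sin,
      iteratedDeriv_fun_id_zero] using hthird
  refine mul_left_cancel₀ hπ ?_
  linear_combination this / 3

theorem iteratedDeriv_two_Gamma_one :
    iteratedDeriv 2 Complex.Gamma 1 =
      (Real.eulerMascheroniConstant : ℂ) ^ 2 + (Real.pi : ℂ) ^ 2 / 6 := by
  have h := iteratedDeriv_two_mul_reflection analyticAt_complexGamma_one.contDiffAt
  rw [iteratedDeriv_two_Gamma_mul_reflection, Complex.hasDerivAt_Gamma_one.deriv,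
    Complex.Gamma_one] at h
  linear_combination -h / 2

end Gamma

section Cpow

variable {y : ℂ}

theorem iteratedDeriv_cpow_neg (hy : y ≠ 0) (n : ℕ) :
    iteratedDeriv n (fun s : ℂ ↦ y ^ (-s)) = fun s ↦ (-Complex.log y) ^ n * y ^ (-s) := by
  simpa [Complex.cpow_def_of_ne_zero hy] using iteratedDeriv_cexp_const_mul n (-Complex.log y)

theorem log_ofReal_div {r : ℝ} (hr : 0 < r) (hy : y ∈ Complex.slitPlane) :
    Complex.log (r / y) = Complex.log r - Complex.log y := by
  obtain ⟨harg, hy0⟩ := Complex.mem_slitPlane_iff_arg.1 hy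
  rw [div_eq_mul_inv, Complex.log_ofReal_mul hr (inv_ne_zero hy0), Complex.log_inv y harg,
    Complex.ofReal_log hr.le, sub_eq_add_neg]

theorem ofReal_div_cpow {r : ℝ} (hr : 0 < r) (hy : y ∈ Complex.slitPlane) (s : ℂ) :
    (r / y : ℂ) ^ s = (r : ℂ) ^ s * y ^ (-s) := by
  have hr0 : (r : ℂ) ≠ 0 := Complex.ofReal_ne_zero.2 hr.ne'
  have hy0 : y ≠ 0 := Complex.slitPlane_ne_zero hy
  rw [Complex.cpow_def_of_ne_zero (div_ne_zero hr0 hy0), Complex.cpow_def_of_ne_zero hr0,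
    Complex.cpow_def_of_ne_zero hy0, log_ofReal_div hr hy, ← Complex.exp_add]
  ring_nf

end Cpow

section MellinExp

variable {y : ℂ}

/-- The function `y⁻ˢ Γ(s)` of `s`, which for `0 < re y` and `0 < re s` is the Mellin transform
`∫₀^∞ x^(s-1) e^(-yx) dx` of `x ↦ e^(-yx)`. The closed form is used as the definition because it
needs no convergence condition. -/
noncomputable def mellinExp (y s : ℂ) : ℂ := y ^ (-s) * Complex.Gamma s

theorem mellinExp_one (y : ℂ) : mellinExp y 1 = y⁻¹ := by
  simp [mellinExp, Complex.cpow_neg_one]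

theorem analyticAt_cpow_neg (hy : y ≠ 0) (s : ℂ) : AnalyticAt ℂ (fun s ↦ y ^ (-s)) s := by
  simp only [Complex.cpow_def_of_ne_zero hy]
  fun_prop

theorem analyticAt_mellinExp_one (hy : y ≠ 0) : AnalyticAt ℂ (mellinExp y) 1 :=
  (analyticAt_cpow_neg hy 1).mul analyticAt_complexGamma_one

theorem deriv_mellinExp_one (hy : y ≠ 0) :
    deriv (mellinExp y) 1 = -y⁻¹ * (Complex.log y + Real.eulerMascheroniConstant) := by
  have hpow : deriv (fun s : ℂ ↦ y ^ (-s)) 1 = -Complex.log y * y⁻¹ := by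
    simp only [← iteratedDeriv_one, iteratedDeriv_cpow_neg hy, pow_one, Complex.cpow_neg_one]
  unfold mellinExp
  rw [deriv_fun_mul (analyticAt_cpow_neg hy 1).differentiableAt
    analyticAt_complexGamma_one.differentiableAt, hpow, Complex.hasDerivAt_Gamma_one.deriv,
    Complex.Gamma_one, Complex.cpow_neg_one]
  ring

theorem iteratedDeriv_two_mellinExp_one (hy : y ≠ 0) :
    iteratedDeriv 2 (mellinExp y) 1 =
      y⁻¹ * ((Complex.log y + Real.eulerMascheroniConstant) ^ 2 + (Real.pi : ℂ) ^ 2 / 6) := by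
  unfold mellinExp
  rw [iteratedDeriv_two_fun_mul (analyticAt_cpow_neg hy 1).contDiffAt
    analyticAt_complexGamma_one.contDiffAt, ← iteratedDeriv_one, iteratedDeriv_cpow_neg hy,
    iteratedDeriv_cpow_neg hy, Complex.hasDerivAt_Gamma_one.deriv, iteratedDeriv_two_Gamma_one,
    Complex.Gamma_one]
  simp only [Complex.cpow_neg_one]
  ring

end MellinExp

section ReflectedZeta

variable {y a : ℂ}

/-- The function `½ ζ(-a) (2π/y)^(1+a) csc(πa/2)` of `a`: the reflection under the functional
equation of `-y⁻ˢ Γ(s) ζ(s)` at `s = 1 + a`. -/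
noncomputable def reflectedZeta (y a : ℂ) : ℂ :=
  (1 / 2) * riemannZeta (-a) * (2 * (Real.pi : ℂ) / y) ^ (1 + a) *
    (1 / Complex.sin ((Real.pi : ℂ) * a / 2))

theorem reflectedZeta_eq_neg_mellinExp_mul_riemannZeta (hy : y ∈ Complex.slitPlane)
    (ha : ∀ n : ℕ, 1 + a ≠ -n) (hsin : Complex.sin ((Real.pi : ℂ) * a / 2) ≠ 0) :
    reflectedZeta y a = -(mellinExp y (1 + a) * riemannZeta (1 + a)) := by
  have ha0 : a ≠ 0 := by
    rintro rfl
    simp at hsin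
  have hcos : Complex.cos (Real.pi * (1 + a) / 2) = -Complex.sin (Real.pi * a / 2) := by
    rw [← Complex.cos_add_pi_div_two]
    ring_nf
  have hpow : (2 * (Real.pi : ℂ) / y) ^ (1 + a) =
      (2 * (Real.pi : ℂ)) ^ (1 + a) * y ^ (-(1 + a)) := by
    exact_mod_cast ofReal_div_cpow Real.two_pi_pos hy (1 + a)
  have hpow0 : (2 * (Real.pi : ℂ)) ^ (1 + a) ≠ 0 := by
    simp [Real.pi_ne_zero]
  have hζ : riemannZeta (-a) = 2 * (2 * (Real.pi : ℂ)) ^ (-(1 + a)) * Complex.Gamma (1 + a) *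
      -Complex.sin (Real.pi * a / 2) * riemannZeta (1 + a) := by
    rw [← hcos, ← riemannZeta_one_sub ha (by simpa using ha0), sub_add_cancel_left]
  rw [reflectedZeta, mellinExp, hζ, hpow, Complex.cpow_neg (2 * (Real.pi : ℂ))]
  field_simp

theorem eventually_sin_pi_mul_div_two_ne_zero :
    ∀ᶠ a in 𝓝[≠] 0, Complex.sin ((Real.pi : ℂ) * a / 2) ≠ 0 := by
  have hπ : (Real.pi : ℂ) / 2 ≠ 0 := by simp [Real.pi_ne_zero]
  simpa only [mul_div_right_comm] using eventually_sin_const_mul_ne_zero hπ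

theorem reflectedZeta_eventuallyEq (hy : y ∈ Complex.slitPlane) :
    reflectedZeta y =ᶠ[𝓝[≠] 0] fun a ↦ -(mellinExp y (1 + a) * riemannZeta (1 + a)) := by
  have hre : ∀ᶠ a : ℂ in 𝓝[≠] 0, 0 < (1 + a).re :=
    nhdsWithin_le_nhds (ContinuousAt.eventually_lt (by fun_prop) (by fun_prop) (by simp))
  filter_upwards [hre, eventually_sin_pi_mul_div_two_ne_zero] with a ha hsin
  exact reflectedZeta_eq_neg_mellinExp_mul_riemannZeta hy (ne_neg_natCast_of_re_pos ha) hsin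

theorem hasDerivAt_reflectedZeta (hy : y ≠ 0) (ha : a ≠ -1)
    (hsin : Complex.sin ((Real.pi : ℂ) * a / 2) ≠ 0) :
    HasDerivAt (reflectedZeta y)
      (-((1 / 2) * (2 * (Real.pi : ℂ) / y) ^ (1 + a) * (1 / Complex.sin ((Real.pi : ℂ) * a / 2)) *
          deriv riemannZeta (-a)) +
        reflectedZeta y a * (Complex.log (2 * (Real.pi : ℂ) / y) - ((Real.pi : ℂ) / 2) *
          (Complex.cos ((Real.pi : ℂ) * a / 2) / Complex.sin ((Real.pi : ℂ) * a / 2)))) a := by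
  have hbase : 2 * (Real.pi : ℂ) / y ≠ 0 := by simp [hy, Real.pi_ne_zero]
  have hζ : HasDerivAt (fun a ↦ riemannZeta (-a)) (-deriv riemannZeta (-a)) a := by
    simpa [Function.comp_def] using
      (differentiableAt_riemannZeta (neg_eq_iff_eq_neg.not.2 ha)).hasDerivAt.comp a
        (hasDerivAt_neg a)
  have hpow : HasDerivAt (fun a ↦ (2 * (Real.pi : ℂ) / y) ^ (1 + a))
      ((2 * (Real.pi : ℂ) / y) ^ (1 + a) * Complex.log (2 * (Real.pi : ℂ) / y)) a := by
    simpa using ((hasDerivAt_id a).const_add 1).const_cpow (Or.inl hbase)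
  have hcsc : HasDerivAt (fun a ↦ 1 / Complex.sin ((Real.pi : ℂ) * a / 2))
      (-(Real.pi / 2 * Complex.cos ((Real.pi : ℂ) * a / 2)) /
        Complex.sin ((Real.pi : ℂ) * a / 2) ^ 2) a := by
    simpa [mul_comm] using
      (((hasDerivAt_id a).const_mul (Real.pi : ℂ)).div_const 2).csin.fun_inv hsin
  refine (((hζ.const_mul (1 / 2)).fun_mul hpow).fun_mul hcsc).congr_deriv ?_
  unfold reflectedZeta
  generalize Complex.sin ((Real.pi : ℂ) * a / 2) = S at hsin
  generalize (2 * (Real.pi : ℂ) / y) ^ (1 + a) = P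
  field_simp
  ring

theorem tendsto_deriv_reflectedZeta (hy : y ∈ Complex.slitPlane) :
    Tendsto (fun a ↦ deriv (reflectedZeta y) a - y⁻¹ / a ^ 2) (𝓝[≠] 0)
      (𝓝 (-(iteratedDeriv 2 (mellinExp y) 1 / 2
        + Real.eulerMascheroniConstant * deriv (mellinExp y) 1
        + y⁻¹ * (iteratedDeriv 2 riemannZeta₁ 1 / 2)))) := by
  have hshift : Tendsto (fun a : ℂ ↦ 1 + a) (𝓝[≠] 0) (𝓝[≠] 1) := by
    simpa using ((hasDerivAt_id (0 : ℂ)).const_add 1).tendsto_nhdsNE one_ne_zero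
  have h := (tendsto_deriv_mul_riemannZeta_add_div_sq
    (analyticAt_mellinExp_one (Complex.slitPlane_ne_zero hy))).comp hshift
  rw [mellinExp_one] at h
  refine h.neg.congr' ?_
  filter_upwards [(reflectedZeta_eventuallyEq hy).nhdsNE_deriv] with a ha
  rw [ha, deriv.fun_neg, deriv_comp_const_add (fun s ↦ mellinExp y s * riemannZeta s),
    Function.comp_apply, add_sub_cancel_left]
  ring

end ReflectedZeta

theorem stmt16_general (y : ℂ) (hy : y ∈ Complex.slitPlane) :
    Filter.Tendsto (fun a : ℂ =>
        deriv riemannZeta (1 - a) / y - (1/2) * deriv riemannZeta (-a)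
          - (1/2) * (2 * (Real.pi : ℂ) / y) ^ ((1 : ℂ) + a)
              * (1 / Complex.sin ((Real.pi : ℂ) * a / 2)) * deriv riemannZeta (-a)
          + (1/2) * riemannZeta (-a) * (2 * (Real.pi : ℂ) / y) ^ ((1 : ℂ) + a)
              * (1 / Complex.sin ((Real.pi : ℂ) * a / 2))
              * (Complex.log (2 * (Real.pi : ℂ) / y)
                - ((Real.pi : ℂ) / 2)
                  * (Complex.cos ((Real.pi : ℂ) * a / 2) / Complex.sin ((Real.pi : ℂ) * a / 2))))
      (nhdsWithin 0 {(0 : ℂ)}ᶜ)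
      (nhds ((1/4) * Complex.log (2 * (Real.pi : ℂ)) - (Complex.log y) ^ 2 / (2 * y)
        + (eulerGamma : ℂ) ^ 2 / (2 * y) - (Real.pi : ℂ) ^ 2 / (12 * y))) := by
  have hy0 : y ≠ 0 := Complex.slitPlane_ne_zero hy
  have hlim := ((tendsto_deriv_riemannZeta_one_sub_add_inv_sq.div_const y).sub
    (tendsto_deriv_riemannZeta_neg.const_mul (1 / 2))).add (tendsto_deriv_reflectedZeta hy)
  rw [iteratedDeriv_two_mellinExp_one hy0, deriv_mellinExp_one hy0] at hlim
  convert hlim.congr' ?_ using 2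
  · rw [eulerGamma]
    field_simp
    ring
  · filter_upwards [eventually_sin_pi_mul_div_two_ne_zero,
      nhdsWithin_le_nhds (eventually_ne_nhds (by norm_num : (0 : ℂ) ≠ -1))] with a hsin ha
    rw [(hasDerivAt_reflectedZeta hy0 ha hsin).deriv, reflectedZeta]
    ring

theorem stmt16 (y : ℂ) (hy : 0 < y.re) :
    Filter.Tendsto (fun a : ℂ =>
        deriv riemannZeta (1 - a) / y - (1/2) * deriv riemannZeta (-a)
          - (1/2) * (2 * (Real.pi : ℂ) / y) ^ ((1 : ℂ) + a)
              * (1 / Complex.sin ((Real.pi : ℂ) * a / 2)) * deriv riemannZeta (-a)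
          + (1/2) * riemannZeta (-a) * (2 * (Real.pi : ℂ) / y) ^ ((1 : ℂ) + a)
              * (1 / Complex.sin ((Real.pi : ℂ) * a / 2))
              * (Complex.log (2 * (Real.pi : ℂ) / y)
                - ((Real.pi : ℂ) / 2)
                  * (Complex.cos ((Real.pi : ℂ) * a / 2) / Complex.sin ((Real.pi : ℂ) * a / 2))))
      (nhdsWithin 0 {(0 : ℂ)}ᶜ)
      (nhds ((1/4) * Complex.log (2 * (Real.pi : ℂ)) - (Complex.log y) ^ 2 / (2 * y)
        + (eulerGamma : ℂ) ^ 2 / (2 * y) - (Real.pi : ℂ) ^ 2 / (12 * y))) := by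
  exact stmt16_general y (Or.inl hy)
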